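/- arXiv:0711.2992 — 5 statements merged into one kernel-verified Lean document; each statement's English description precedes it below -/
import Mathlib

section
/- Fix a real number w with w ≠ 0, and define D(u) := u² + 3(w² − 4w), M̄₊(u) := 36w²((w+u)² − 4w)/D(u)² and M̄₋(u) := 36w²((w−u)² − 4w)/D(u)². If u₀ ≥ 0 and u₁ ≥ 0 satisfy D(u₀) ≠ 0, D(u₁) ≠ 0, M̄₊(u₀) = M̄₊(u₁) and M̄₋(u₀) = M̄₋(u₁), then u₀ = u₁. (Thus the constant-radius vacuum shell joining two given bulk masses is unique.) -/
/-- Uniqueness of the constant-radius vacuum shell joining two given bulk masses: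
for fixed `w ≠ 0`, the pair of mass parameters determines `u ≥ 0` uniquely. -/
theorem stmt_0 (w : ℝ) (hw : w ≠ 0)
    (D Mp Mm : ℝ → ℝ)
    (hD : ∀ u, D u = u ^ 2 + 3 * (w ^ 2 - 4 * w))
    (hMp : ∀ u, Mp u = 36 * w ^ 2 * ((w + u) ^ 2 - 4 * w) / (D u) ^ 2)
    (hMm : ∀ u, Mm u = 36 * w ^ 2 * ((w - u) ^ 2 - 4 * w) / (D u) ^ 2)
    (u₀ u₁ : ℝ) (hu₀ : 0 ≤ u₀) (hu₁ : 0 ≤ u₁)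
    (hD₀ : D u₀ ≠ 0) (hD₁ : D u₁ ≠ 0)
    (hp : Mp u₀ = Mp u₁) (hm : Mm u₀ = Mm u₁) :
    u₀ = u₁ := by
  set c := w ^ 2 - 4 * w with hc
  have hw2 : w ^ 2 ≠ 0 := pow_ne_zero 2 hw
  rw [hMp, hMp, div_eq_div_iff (pow_ne_zero 2 hD₀) (pow_ne_zero 2 hD₁)] at hp
  rw [hMm, hMm, div_eq_div_iff (pow_ne_zero 2 hD₀) (pow_ne_zero 2 hD₁)] at hm
  have hdiff : u₀ * D u₁ ^ 2 = u₁ * D u₀ ^ 2 := by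
    apply mul_left_cancel₀ (mul_ne_zero hw hw2)
    linear_combination (hp - hm) / 144
  have hsum : (u₀ ^ 2 + c) * D u₁ ^ 2 = (u₁ ^ 2 + c) * D u₀ ^ 2 := by
    apply mul_left_cancel₀ hw2
    rw [hc]
    linear_combination (hp + hm) / 72
  have hprod : (u₁ - u₀) * (u₀ * u₁ - c) = 0 := by
    apply mul_left_cancel₀ (mul_ne_zero (pow_ne_zero 2 hD₀) (pow_ne_zero 2 hD₁))
    linear_combination (u₁ ^ 2 + c) * D u₀ ^ 2 * hdiff - u₁ * D u₀ ^ 2 * hsum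
  rcases mul_eq_zero.mp hprod with h | h
  · linarith
  rcases hu₀.eq_or_lt with h₀ | h₀
  · subst h₀
    rw [zero_mul] at hdiff
    exact ((mul_eq_zero.mp hdiff.symm).resolve_right (pow_ne_zero 2 hD₀)).symm
  rcases hu₁.eq_or_lt with h₁ | h₁
  · subst h₁
    rw [zero_mul] at hdiff
    exact (mul_eq_zero.mp hdiff).resolve_right (pow_ne_zero 2 hD₁)
  have hcube : (u₁ - u₀) ^ 3 = 0 := by
    apply mul_left_cancel₀ (mul_pos h₀ h₁).ne'
    rw [hD, hD, show c = u₀ * u₁ by linarith] at hdiff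
    linear_combination hdiff
  linarith [pow_eq_zero_iff three_ne_zero |>.mp hcube]
end

section
/- Let w > 0 with w ≠ 1, and set u := w + 2√w. Then D(w,u) = 4w(√w + 2)(√w − 1) ≠ 0, M̄₋(w,u) = 0, and M̄₊(w,u) = 9w√w / ((w−3)√w + 2), where the denominator satisfies (w−3)√w + 2 = (√w − 1)²(√w + 2) ≠ 0. (This describes the vacuum shells for which one bulk region is a pure constant-curvature vacuum and gives the mass of the other side.) -/
/-- Zero-mass ("hole in the vacuum") shells: for `w > 0`, `w ≠ 1` and
`u = w + 2√w` one has `D = 4w(√w+2)(√w−1) ≠ 0`, `M̄₋ = 0` and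
`M̄₊ = 9w√w/((w−3)√w+2)` with nonvanishing denominator. -/
theorem stmt_4 (w u : ℝ) (hw : 0 < w) (hw1 : w ≠ 1)
    (hu : u = w + 2 * Real.sqrt w) :
    u ^ 2 + 3 * (w ^ 2 - 4 * w)
      = 4 * w * (Real.sqrt w + 2) * (Real.sqrt w - 1) ∧
    u ^ 2 + 3 * (w ^ 2 - 4 * w) ≠ 0 ∧
    36 * w ^ 2 * ((w - u) ^ 2 - 4 * w) / (u ^ 2 + 3 * (w ^ 2 - 4 * w)) ^ 2 = 0 ∧
    (w - 3) * Real.sqrt w + 2 = (Real.sqrt w - 1) ^ 2 * (Real.sqrt w + 2) ∧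
    (w - 3) * Real.sqrt w + 2 ≠ 0 ∧
    36 * w ^ 2 * ((w + u) ^ 2 - 4 * w) / (u ^ 2 + 3 * (w ^ 2 - 4 * w)) ^ 2
      = 9 * w * Real.sqrt w / ((w - 3) * Real.sqrt w + 2) := by
  obtain ⟨s, hs, rfl⟩ : ∃ s : ℝ, 0 < s ∧ w = s ^ 2 :=
    ⟨√w, Real.sqrt_pos.2 hw, (Real.sq_sqrt hw.le).symm⟩
  rw [Real.sqrt_sq hs.le] at hu ⊢
  subst hu
  have hs1 : s - 1 ≠ 0 := fun h => hw1 (by rw [sub_eq_zero.1 h, one_pow])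
  have hs2 : s + 2 ≠ 0 := by positivity
  have hD : (s ^ 2 + 2 * s) ^ 2 + 3 * ((s ^ 2) ^ 2 - 4 * s ^ 2)
      = 4 * s ^ 2 * (s + 2) * (s - 1) := by ring
  have hden : (s ^ 2 - 3) * s + 2 = (s - 1) ^ 2 * (s + 2) := by ring
  rw [hD, hden]
  refine ⟨rfl, by positivity, ?_, rfl, by positivity, ?_⟩
  · rw [show (s ^ 2 - (s ^ 2 + 2 * s)) ^ 2 - 4 * s ^ 2 = 0 by ring, mul_zero, zero_div]
  · field_simp
    ring
end

section
/- Let Y_L ≥ 0, Y_R ≥ 0 be real, let ξ_L, ξ_R ∈ {−1, +1}, let σ ∈ {−1, +1} and α ≠ 0 be real. If σα(ξ_R Y_R + ξ_L Y_L) > 0 and 9(ξ_R Y_R + ξ_L Y_L)² ≤ (ξ_R Y_R − ξ_L Y_L)², then ξ_L ξ_R = −1. Hence every vacuum shell with the standard orientation glues a plus-branch (ξ = +1) metric to a minus-branch (ξ = −1) metric. -/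
/-- A vacuum shell with standard orientation always glues a plus-branch metric
to a minus-branch metric: the junction inequalities force `ξ_L ξ_R = −1`. -/
theorem stmt_8 (YL YR ξL ξR σ α : ℝ)
    (hYL : 0 ≤ YL) (hYR : 0 ≤ YR)
    (hξL : ξL = -1 ∨ ξL = 1) (hξR : ξR = -1 ∨ ξR = 1)
    (hσ : σ = -1 ∨ σ = 1) (hα : α ≠ 0)
    (h1 : 0 < σ * α * (ξR * YR + ξL * YL))
    (h2 : 9 * (ξR * YR + ξL * YL) ^ 2 ≤ (ξR * YR - ξL * YL) ^ 2) :
    ξL * ξR = -1 := by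
  have hs : 0 < (ξR * YR + ξL * YL) ^ 2 :=
    sq_pos_of_ne_zero (right_ne_zero_of_mul h1.ne')
  have hY : 0 ≤ YL * YR := mul_nonneg hYL hYR
  rcases hξL with rfl | rfl <;> rcases hξR with rfl | rfl
  · nlinarith
  · norm_num
  · norm_num
  · nlinarith
end

section
/- Let α ≠ 0, σ ∈ {−1, +1}, k, w, M_L, M_R be real and ξ_L, ξ_R ∈ {−1, +1}. For a > 0 define Y_{L,R}(a) := √(w + 16M_{L,R}α/a⁴), S(a) := ξ_R Y_R(a) + ξ_L Y_L(a), Δ(a) := ξ_R Y_R(a) − ξ_L Y_L(a), and the effective potential V(a) := σ(k + a²/(4α)) − σ(a²/(4α))·(3S(a)² + Δ(a)²)/(12 S(a)). Then at every a₀ > 0 with w + 16M_Lα/a₀⁴ > 0, w + 16M_Rα/a₀⁴ > 0 and S(a₀) ≠ 0, V is differentiable with V'(a₀) = σ(a₀/(2α))·(1 − w/S(a₀)). -/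
/-- A signed branch `r(a) = ξ √(w + c/a⁴)` satisfies `r' = -2 (r² - w) / (a r)`. -/
theorem hasDerivAt_signed_sqrt {ξ w c a : ℝ} (hξ : ξ = -1 ∨ ξ = 1) (ha : a ≠ 0)
    (h : 0 < w + c / a ^ 4) :
    HasDerivAt (fun x : ℝ => ξ * Real.sqrt (w + c / x ^ 4))
      (-2 * ((ξ * Real.sqrt (w + c / a ^ 4)) ^ 2 - w) /
        (a * (ξ * Real.sqrt (w + c / a ^ 4)))) a := by
  have hinner : HasDerivAt (fun x : ℝ => w + c / x ^ 4) (-4 * c / a ^ 5) a := by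
    refine (((hasDerivAt_const a c).fun_div (hasDerivAt_pow 4 a)
      (pow_ne_zero 4 ha)).const_add w).congr_deriv ?_
    field_simp
    ring
  refine ((hinner.sqrt h.ne').const_mul ξ).congr_deriv ?_
  have hY : Real.sqrt (w + c / a ^ 4) ≠ 0 := (Real.sqrt_pos.mpr h).ne'
  have hsq : ξ ^ 2 = 1 := by rcases hξ with rfl | rfl <;> norm_num
  have hξ0 : ξ ≠ 0 := by rcases hξ with rfl | rfl <;> norm_num
  rw [mul_pow, Real.sq_sqrt h.le, hsq]
  generalize Real.sqrt (w + c / a ^ 4) = Y at hY ⊢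
  field_simp
  rw [hsq]
  ring

/-- If `r' = -2 (r² - w) / (a r)` and `l' = -2 (l² - w) / (a l)`, then
`x² (3 (r + l)² + (r - l)²) / (12 (r + l))` has derivative `2 a w / (r + l)`. -/
theorem hasDerivAt_sq_mul_branch_quotient {r l : ℝ → ℝ} {w a : ℝ}
    (hr0 : r a ≠ 0) (hl0 : l a ≠ 0) (hS : r a + l a ≠ 0)
    (hr : HasDerivAt r (-2 * ((r a) ^ 2 - w) / (a * r a)) a)
    (hl : HasDerivAt l (-2 * ((l a) ^ 2 - w) / (a * l a)) a) :
    HasDerivAt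
      (fun x => x ^ 2 * (3 * (r x + l x) ^ 2 + (r x - l x) ^ 2) / (12 * (r x + l x)))
      (2 * a * w / (r a + l a)) a := by
  refine (((hasDerivAt_pow 2 a).fun_mul ((((hr.fun_add hl).fun_pow 2).const_mul 3).fun_add
    ((hr.fun_sub hl).fun_pow 2))).fun_div ((hr.fun_add hl).const_mul 12)
    (mul_ne_zero (by norm_num) hS)).congr_deriv ?_
  generalize r a = R at *
  generalize l a = L at *
  field_simp
  ring

/-- The effective potential of a dynamical vacuum shell is differentiable at each
admissible radius `a₀`, with `V'(a₀) = σ(a₀/(2α))(1 − w/S(a₀))`, where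
`S = ξ_R Y_R + ξ_L Y_L` and `Y_{L,R}(a) = √(w + 16M_{L,R}α/a⁴)`. -/
theorem stmt_15 (α σ k w ML MR ξL ξR : ℝ) (hα : α ≠ 0)
    (hσ : σ = -1 ∨ σ = 1) (hξL : ξL = -1 ∨ ξL = 1) (hξR : ξR = -1 ∨ ξR = 1)
    (a₀ : ℝ) (ha₀ : 0 < a₀)
    (hL : 0 < w + 16 * ML * α / a₀ ^ 4)
    (hR : 0 < w + 16 * MR * α / a₀ ^ 4)
    (hS : ξR * Real.sqrt (w + 16 * MR * α / a₀ ^ 4)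
        + ξL * Real.sqrt (w + 16 * ML * α / a₀ ^ 4) ≠ 0) :
    HasDerivAt
      (fun a : ℝ =>
        σ * (k + a ^ 2 / (4 * α)) -
          σ * (a ^ 2 / (4 * α)) *
            (3 * (ξR * Real.sqrt (w + 16 * MR * α / a ^ 4)
                  + ξL * Real.sqrt (w + 16 * ML * α / a ^ 4)) ^ 2
              + (ξR * Real.sqrt (w + 16 * MR * α / a ^ 4)
                  - ξL * Real.sqrt (w + 16 * ML * α / a ^ 4)) ^ 2) /
            (12 * (ξR * Real.sqrt (w + 16 * MR * α / a ^ 4)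
                  + ξL * Real.sqrt (w + 16 * ML * α / a ^ 4))))
      (σ * (a₀ / (2 * α)) *
        (1 - w / (ξR * Real.sqrt (w + 16 * MR * α / a₀ ^ 4)
                  + ξL * Real.sqrt (w + 16 * ML * α / a₀ ^ 4))))
      a₀ := by
  have hξL0 : ξL ≠ 0 := by rcases hξL with rfl | rfl <;> norm_num
  have hξR0 : ξR ≠ 0 := by rcases hξR with rfl | rfl <;> norm_num
  have hquot := hasDerivAt_sq_mul_branch_quotient
    (r := fun x => ξR * Real.sqrt (w + 16 * MR * α / x ^ 4))
    (l := fun x => ξL * Real.sqrt (w + 16 * ML * α / x ^ 4))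
    (mul_ne_zero hξR0 (Real.sqrt_pos.mpr hR).ne') (mul_ne_zero hξL0 (Real.sqrt_pos.mpr hL).ne')
    hS (hasDerivAt_signed_sqrt hξR ha₀.ne' hR) (hasDerivAt_signed_sqrt hξL ha₀.ne' hL)
  have hquad := (((hasDerivAt_pow 2 a₀).div_const (4 * α)).const_add k).const_mul σ
  refine ((hquad.fun_sub (hquot.const_mul (σ / (4 * α)))).congr_deriv ?_).congr_of_eventuallyEq
    (Filter.Eventually.of_forall fun x => ?_)
  · field_simp
    ring
  · ring
end

section
/- Let b > 0 be real, and define M̄₊ := (b/2)(6 + 3b + √(9b² + 12b)), M̄₋ := (b/2)(6 + 3b − √(9b² + 12b)), Y₊ := √(1 + M̄₊/b²), Y₋ := √(1 + M̄₋/b²), f₊ := 1 + b(1 + Y₊) and f₋ := 1 + b(1 − Y₋). Then M̄₊ > 0 and M̄₋ > 0, f₊ + f₋ = 2 + 3b, f₊·f₋ = 1, and f₊ > 0, f₋ > 0. Hence for Λ = 0 and α > 0 a static vacuum shell with standard orientation exists for every shell radius, gluing a plus-branch metric with mass parameter M₊ = α M̄₊ to a minus-branch metric with mass parameter M₋ =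 α M̄₋. -/
/-- For `Λ = 0` and `α > 0`, a static vacuum shell with standard orientation
exists at every radius: with `b = a₀²/(4α)`, the masses
`M̄₊ = (b/2)(6+3b+√(9b²+12b))` and `M̄₋ = (b/2)(6+3b−√(9b²+12b))` are positive,
and the corresponding metric functions `f₊ = 1+b(1+Y₊)`, `f₋ = 1+b(1−Y₋)` with
`Y± = √(1+M̄±/b²)` satisfy the junction conditions `f₊+f₋ = 2+3b`, `f₊f₋ = 1`,
and are positive. -/
theorem stmt_19 (b : ℝ) (hb : 0 < b)
    (Mp Mm Yp Ym fp fm : ℝ)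
    (hMp : Mp = (b / 2) * (6 + 3 * b + Real.sqrt (9 * b ^ 2 + 12 * b)))
    (hMm : Mm = (b / 2) * (6 + 3 * b - Real.sqrt (9 * b ^ 2 + 12 * b)))
    (hYp : Yp = Real.sqrt (1 + Mp / b ^ 2))
    (hYm : Ym = Real.sqrt (1 + Mm / b ^ 2))
    (hfp : fp = 1 + b * (1 + Yp))
    (hfm : fm = 1 + b * (1 - Ym)) :
    0 < Mp ∧ 0 < Mm ∧ fp + fm = 2 + 3 * b ∧ fp * fm = 1 ∧ 0 < fp ∧ 0 < fm := by
  set s := Real.sqrt (9 * b ^ 2 + 12 * b)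
  have s_sq : s ^ 2 = 9 * b ^ 2 + 12 * b := Real.sq_sqrt (by positivity)
  have s_nonneg : 0 ≤ s := Real.sqrt_nonneg _
  have s_lt : s < 2 + 3 * b := by nlinarith
  have b_lt : b < s := by nlinarith
  have Yp_eq : Yp = (s + b) / (2 * b) := by
    have h : 1 + Mp / b ^ 2 = ((s + b) / (2 * b)) ^ 2 := by
      rw [hMp]
      field_simp
      linear_combination -s_sq
    rw [hYp, h, Real.sqrt_sq (by positivity)]
  have Ym_eq : Ym = (s - b) / (2 * b) := by
    have h : 1 + Mm / b ^ 2 = ((s - b) / (2 * b)) ^ 2 := by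
      rw [hMm]
      field_simp
      linear_combination -s_sq
    rw [hYm, h, Real.sqrt_sq (div_nonneg (by linarith) (by linarith))]
  have fp_eq : fp = (2 + 3 * b + s) / 2 := by
    rw [hfp, Yp_eq]
    field_simp
    ring
  have fm_eq : fm = (2 + 3 * b - s) / 2 := by
    rw [hfm, Ym_eq]
    field_simp
    ring
  refine ⟨by rw [hMp]; positivity, ?_, by rw [fp_eq, fm_eq]; ring, ?_, by rw [fp_eq]; positivity,
    by rw [fm_eq]; linarith⟩
  · rw [hMm]
    exact mul_pos (by linarith) (by linarith)
  · rw [fp_eq, fm_eq]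
    linear_combination -s_sq / 4
end
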